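/- Let C ∈ 𝕊ⁿ₊ with rank r, let 0 < t ≤ r and t ≤ s < n. Then the spectral upper bound Σ_{ℓ=1}^t log(λ_ℓ(C)) plus t·log(s/t) is an upper bound on the generalized factorization bound; i.e., there exists a feasible solution of the convex program DGFact — minimize −Σ_{ℓ=k−t+1}^k log(λ_ℓ(Θ)) + νᵀ𝟙 + τs − t subject to diag(F Θ Fᵀ) + υ − ν − τ𝟙 = 0, Θ ≻ 0, υ ≥ 0, ν ≥ 0 — whose objective value equals Σ_{ℓ=1}^t log(λ_ℓ(C)) + t·log(s/t). In particular, z_DGFact(C,s,t;F) − Σ_{ℓ=1}^t log(λ_ℓ(C)) ≤ t·log(s/t). -/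

import Mathlib

/-- `descEig W i` is the `(i+1)`-th greatest eigenvalue of the real symmetric matrix `W`
(junk value `0` if `W` is not symmetric). -/
noncomputable def descEig {k : ℕ} (W : Matrix (Fin k) (Fin k) ℝ) : Fin k → ℝ :=
  fun i => if h : W.IsHermitian then (h.eigenvalues ∘ Tuple.sort h.eigenvalues) i.rev else 0

/-! Put `G = Fᵀ F`, `a = t / s` and let `lam` be the least positive eigenvalue of `G`. Then
`Θ̂ = f(G)` for `f x = a / max x lam`, so its eigenvalues, and with them the objective, are
explicit. Since `f x * x ≤ a` for all `x`, the matrix `B = F Θ̂ Fᵀ` satisfies `B² ≤ a B`; comparing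
diagonal entries gives `B j j ≤ a`, which is `υ̂ ≥ 0`.

The value of DGFact is an infimum, so the bound on it also needs the objective to be bounded below:
in `ℝ` the infimum of an unbounded set is `0`. By the trace inequality
`∑ λ_i(G) λ_{k+1-i}(Θ) ≤ tr (G Θ)` and `log x ≤ x - 1`, every feasible point has objective at least
`∑_{ℓ ≤ t} log λ_ℓ(G) + t log (s / n)`.
-/

section DescEig

open Matrix Polynomial

variable {k : ℕ} {W : Matrix (Fin k) (Fin k) ℝ}

lemma descEig_antitone (W : Matrix (Fin k) (Fin k) ℝ) : Antitone (descEig W) := by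
  intro i j hij
  unfold descEig
  split_ifs with hW
  · exact Tuple.monotone_sort hW.eigenvalues (Fin.rev_le_rev.mpr hij)
  · exact le_rfl

lemma exists_perm_descEig_eq (hW : W.IsHermitian) :
    ∃ e : Equiv.Perm (Fin k), descEig W = hW.eigenvalues ∘ e :=
  ⟨Fin.revPerm.trans (Tuple.sort hW.eigenvalues), funext fun _ => dif_pos hW⟩

lemma charpoly_eq_prod_descEig (hW : W.IsHermitian) :
    W.charpoly = ∏ i, (X - C (descEig W i)) := by
  obtain ⟨e, he⟩ := exists_perm_descEig_eq hW
  rw [hW.charpoly_eq, he]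
  exact (Equiv.prod_comp e fun i => X - C (hW.eigenvalues i)).symm

lemma descEig_eq_of_charpoly_eq_prod (hW : W.IsHermitian) {f : Fin k → ℝ} (hf : Antitone f)
    (hcharpoly : W.charpoly = ∏ i, (X - C (f i))) : descEig W = f := by
  have hroots (g : Fin k → ℝ) : (∏ i, (X - C (g i))).roots = ↑(List.ofFn g) := by
    rw [← Fin.univ_val_map, ← Polynomial.roots_multiset_prod_X_sub_C (Finset.univ.val.map g),
      Multiset.map_map]
    rfl
  have hperm : (List.ofFn (descEig W)).Perm (List.ofFn f) := by
    rw [← Multiset.coe_eq_coe, ← hroots, ← hroots, ← charpoly_eq_prod_descEig hW, hcharpoly]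
  exact List.ofFn_injective <|
    hperm.eq_of_sortedGE (descEig_antitone W).sortedGE_ofFn hf.sortedGE_ofFn

lemma descEig_mem_spectrum (hW : W.IsHermitian) (i : Fin k) : descEig W i ∈ spectrum ℝ W := by
  obtain ⟨e, he⟩ := exists_perm_descEig_eq hW
  exact he ▸ hW.eigenvalues_mem_spectrum_real (e i)

lemma descEig_cfc_of_antitoneOn (hW : W.IsHermitian) {f : ℝ → ℝ}
    (hf : AntitoneOn f (spectrum ℝ W)) : descEig (cfc f W) = fun i => f (descEig W i.rev) := by
  refine descEig_eq_of_charpoly_eq_prod (cfc_predicate f W) ?_ ?_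
  · intro i j hij
    exact hf (descEig_mem_spectrum hW _) (descEig_mem_spectrum hW _)
      (descEig_antitone W (Fin.rev_le_rev.mpr hij))
  · obtain ⟨e, he⟩ := exists_perm_descEig_eq hW
    rw [hW.charpoly_cfc_eq, he]
    exact (Equiv.prod_comp (Fin.revPerm.trans e) fun i => X - C (f (hW.eigenvalues i))).symm

lemma descEig_nonneg (hW : W.PosSemidef) (i : Fin k) : 0 ≤ descEig W i := by
  obtain ⟨e, he⟩ := exists_perm_descEig_eq hW.1
  exact he ▸ hW.eigenvalues_nonneg (e i)

lemma posDef_iff_forall_descEig_pos (hW : W.IsHermitian) :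
    W.PosDef ↔ ∀ i, 0 < descEig W i := by
  obtain ⟨e, he⟩ := exists_perm_descEig_eq hW
  rw [hW.posDef_iff_eigenvalues_pos, he]
  exact e.forall_congr_right.symm

lemma descEig_pos_iff_lt_rank (hW : W.PosSemidef) (i : Fin k) :
    0 < descEig W i ↔ (i : ℕ) < W.rank := by
  obtain ⟨e, he⟩ := exists_perm_descEig_eq hW.1
  have hrank : W.rank = Finset.card {j | 0 < descEig W j} := by
    rw [hW.1.rank_eq_card_non_zero_eigs, ← Fintype.card_subtype]
    refine (Fintype.card_congr (e.subtypeEquiv fun j => ?_)).symm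
    rw [he]
    exact (hW.eigenvalues_nonneg (e j)).lt_iff_ne'
  rw [hrank]
  exact (Tuple.lt_card_gt_iff_apply_gt_of_antitone (descEig_antitone W)).symm

end DescEig

section Gram

open Matrix Polynomial

lemma posSemidef_transpose_mul_self {m k : Type*} [Fintype m] [Finite k] (F : Matrix m k ℝ) :
    (Fᵀ * F).PosSemidef := by
  simpa only [conjTranspose_eq_transpose_of_trivial] using posSemidef_conjTranspose_mul_self F

lemma descEig_mul_transpose_self {k d : ℕ} (F : Matrix (Fin (k + d)) (Fin k) ℝ) :
    descEig (F * Fᵀ) = Fin.append (descEig (Fᵀ * F)) fun _ => 0 := by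
  have hG : (Fᵀ * F).PosSemidef := posSemidef_transpose_mul_self F
  have hW : (F * Fᵀ).IsHermitian := isHermitian_mul_conjTranspose_self F
  refine descEig_eq_of_charpoly_eq_prod hW ?_ ?_
  · intro i j hij
    induction i using Fin.addCases <;> induction j using Fin.addCases
    case left.left i j =>
      simpa using descEig_antitone (Fᵀ * F) (show i ≤ j from hij)
    case left.right i j => simpa using descEig_nonneg hG i
    case right.left i j =>
      have : k + (i : ℕ) ≤ j := hij
      omega
    case right.right => simp
  · rw [charpoly_mul_comm_of_le F Fᵀ (by simp), charpoly_eq_prod_descEig hG.1, Fin.prod_univ_add]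
    simp [mul_comm]

/-- `∑_{ℓ ≤ t} log λ_ℓ(W)`, which is the spectral bound when `W` is the covariance matrix. -/
noncomputable def topLogSum {k : ℕ} (t : ℕ) (W : Matrix (Fin k) (Fin k) ℝ) : ℝ :=
  ∑ i : Fin k, if (i : ℕ) < t then Real.log (descEig W i) else 0

/-- `∑_{ℓ > k - t} log λ_ℓ(W)`, the sum over the `t` least eigenvalues that appears in the
objective of DGFact. -/
noncomputable def bottomLogSum {k : ℕ} (t : ℕ) (W : Matrix (Fin k) (Fin k) ℝ) : ℝ :=
  ∑ i : Fin k, if k - t ≤ (i : ℕ) then Real.log (descEig W i) else 0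

lemma topLogSum_eq_sum_filter {k : ℕ} (t : ℕ) (W : Matrix (Fin k) (Fin k) ℝ) :
    topLogSum t W = ∑ i : Fin k with i.val < t, Real.log (descEig W i) :=
  (Finset.sum_filter _ _).symm

lemma bottomLogSum_eq_sum_rev {k : ℕ} (t : ℕ) (W : Matrix (Fin k) (Fin k) ℝ) :
    bottomLogSum t W = ∑ i : Fin k with i.val < t, Real.log (descEig W i.rev) := by
  rw [bottomLogSum, Finset.sum_filter, ← Equiv.sum_comp Fin.revPerm]
  refine Finset.sum_congr rfl fun i _ => if_congr ?_ rfl rfl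
  rw [Fin.revPerm_apply, Fin.val_rev]
  omega

-- The extra zero eigenvalues of the larger product do not contribute because `Real.log 0 = 0`.
lemma topLogSum_mul_transpose_self {n k : ℕ} (t : ℕ) (F : Matrix (Fin n) (Fin k) ℝ) :
    topLogSum t (F * Fᵀ) = topLogSum t (Fᵀ * F) := by
  wlog hkn : k ≤ n generalizing n k
  · simpa using (this Fᵀ (le_of_not_ge hkn)).symm
  obtain ⟨d, rfl⟩ := Nat.exists_eq_add_of_le hkn
  simp [topLogSum, descEig_mul_transpose_self, Fin.sum_univ_add]

end Gram

section TraceInequality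

open Matrix

variable {ι 𝕜 : Type*} [Fintype ι] [DecidableEq ι] [RCLike 𝕜]

lemma map_norm_sq_mem_doublyStochastic (U : unitaryGroup ι 𝕜) :
    (U : Matrix ι ι 𝕜).map (‖·‖ ^ 2) ∈ doublyStochastic ℝ ι := by
  rw [mem_doublyStochastic_iff_sum]
  refine ⟨fun i j => sq_nonneg _, fun i => ?_, fun j => ?_⟩
  · have hrow := congr_fun₂ (mem_unitaryGroup_iff.mp U.2) i i
    simp only [mul_apply, star_apply, one_apply_eq, RCLike.star_def, RCLike.mul_conj] at hrow
    exact_mod_cast hrow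
  · have hcol := congr_fun₂ (mem_unitaryGroup_iff'.mp U.2) j j
    simp only [mul_apply, star_apply, one_apply_eq, RCLike.star_def, RCLike.conj_mul] at hcol
    exact_mod_cast hcol

lemma trace_diagonal_mul_conj_diagonal (U : Matrix ι ι 𝕜) (a b : ι → ℝ) :
    (diagonal (RCLike.ofReal ∘ a) * (U * diagonal (RCLike.ofReal ∘ b) * star U)).trace =
      ((a ⬝ᵥ U.map (‖·‖ ^ 2) *ᵥ b : ℝ) : 𝕜) := by
  simp only [trace, diag_apply, diagonal_mul, dotProduct, mulVec, map_apply]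
  push_cast
  refine Finset.sum_congr rfl fun i _ => congrArg _ ?_
  rw [mul_apply]
  refine Finset.sum_congr rfl fun j _ => ?_
  rw [mul_diagonal, star_apply, RCLike.star_def, ← RCLike.mul_conj, Function.comp_apply]
  ring

lemma exists_doublyStochastic_trace_mul_eq {A B : Matrix ι ι 𝕜} (hA : A.IsHermitian)
    (hB : B.IsHermitian) :
    ∃ S ∈ doublyStochastic ℝ ι,
      (A * B).trace = ((hA.eigenvalues ⬝ᵥ S *ᵥ hB.eigenvalues : ℝ) : 𝕜) := by
  set P := hA.eigenvectorUnitary with hP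
  set Q := hB.eigenvectorUnitary with hQ
  refine ⟨_, map_norm_sq_mem_doublyStochastic (star P * Q), ?_⟩
  rw [← trace_diagonal_mul_conj_diagonal]
  conv_lhs => rw [hA.spectral_theorem, hB.spectral_theorem, Unitary.conjStarAlgAut_apply,
    Unitary.conjStarAlgAut_apply, mul_assoc, mul_assoc, trace_mul_comm]
  simp only [← hP, ← hQ, Submonoid.coe_mul, star_mul, Unitary.coe_star, star_star, mul_assoc]

lemma dotProduct_le_dotProduct_mulVec_of_antivary {a b : ι → ℝ} (hab : Antivary a b)
    {S : Matrix ι ι ℝ} (hS : S ∈ doublyStochastic ℝ ι) : a ⬝ᵥ b ≤ a ⬝ᵥ S *ᵥ b := by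
  obtain ⟨w, hw_nonneg, hw_sum, rfl⟩ := exists_eq_sum_perm_of_mem_doublyStochastic hS
  calc a ⬝ᵥ b = ∑ σ, w σ * (a ⬝ᵥ b) := by rw [← Finset.sum_mul, hw_sum, one_mul]
    _ ≤ ∑ σ, w σ * (a ⬝ᵥ b ∘ σ) := Finset.sum_le_sum fun σ _ =>
      mul_le_mul_of_nonneg_left hab.sum_mul_le_sum_mul_comp_perm (hw_nonneg σ)
    _ = a ⬝ᵥ (∑ σ, w σ • σ.permMatrix ℝ) *ᵥ b := by
      simp only [sum_mulVec, dotProduct_sum, smul_mulVec, permMatrix_mulVec, dotProduct_smul,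
        smul_eq_mul]

lemma sum_descEig_mul_descEig_rev_le_trace {k : ℕ} {A B : Matrix (Fin k) (Fin k) ℝ}
    (hA : A.IsHermitian) (hB : B.IsHermitian) :
    ∑ i, descEig A i * descEig B i.rev ≤ (A * B).trace := by
  obtain ⟨S, hS, htrace⟩ := exists_doublyStochastic_trace_mul_eq hA hB
  obtain ⟨e, he⟩ := exists_perm_descEig_eq hA
  obtain ⟨e', he'⟩ := exists_perm_descEig_eq hB
  have hantivary : Antivary (descEig A) (descEig B ∘ Fin.revPerm) :=
    (descEig_antitone A).antivary ((descEig_antitone B).comp Fin.rev_anti)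
  have hle := dotProduct_le_dotProduct_mulVec_of_antivary hantivary
    (reindex_mem_doublyStochastic (e₁ := e.symm) (e₂ := (Fin.revPerm.trans e').symm) hS)
  have hB_rev : descEig B ∘ Fin.revPerm = hB.eigenvalues ∘ Fin.revPerm.trans e' := by
    rw [he']; rfl
  have hreindex : descEig A ⬝ᵥ S.reindex e.symm (Fin.revPerm.trans e').symm *ᵥ
      (descEig B ∘ Fin.revPerm) = hA.eigenvalues ⬝ᵥ S *ᵥ hB.eigenvalues := by
    rw [reindex_apply, Equiv.symm_symm, Equiv.symm_symm, submatrix_mulVec_equiv, he, hB_rev,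
      comp_equiv_dotProduct_comp_equiv, Function.comp_assoc, Equiv.self_comp_symm,
      Function.comp_id]
  exact (hle.trans_eq hreindex).trans_eq htrace.symm

end TraceInequality

section DGFact

open Matrix
open scoped MatrixOrder

variable {m : Type*} [Fintype m] {k t : ℕ} {s : ℝ}

/-- Feasibility of `(Θ, υ, ν, τ)` for the convex program DGFact of the factorization `F * Fᵀ`. -/
def DGFactFeasible (F : Matrix m (Fin k) ℝ) (Θ : Matrix (Fin k) (Fin k) ℝ) (υ ν : m → ℝ)
    (τ : ℝ) : Prop :=
  Θ.PosDef ∧ (∀ j, 0 ≤ υ j) ∧ (∀ j, 0 ≤ ν j) ∧ ∀ j, (F * Θ * Fᵀ) j j + υ j - ν j - τ = 0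

/-- The objective function of DGFact, which is to be minimized. -/
noncomputable def dgfactObjective (t : ℕ) (s : ℝ) (Θ : Matrix (Fin k) (Fin k) ℝ) (ν : m → ℝ)
    (τ : ℝ) : ℝ :=
  -bottomLogSum t Θ + ∑ j, ν j + τ * s - t

lemma bottomLogSum_add_topLogSum_le_trace {Θ G : Matrix (Fin k) (Fin k) ℝ} {c : ℝ}
    (hΘ : Θ.PosDef) (hG : G.PosSemidef) (htG : t ≤ G.rank) (hc : 0 < c) :
    bottomLogSum t Θ + (topLogSum t G + t * Real.log c) ≤ c * (G * Θ).trace - t := by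
  have hcard : Finset.card {i : Fin k | i.val < t} = t := by
    rw [Fin.card_filter_val_lt, min_eq_right (htG.trans (rank_le_width G))]
  have hΘ_pos := (posDef_iff_forall_descEig_pos hΘ.1).mp hΘ
  have hlog (i : Fin k) (hi : i.val < t) :
      Real.log (descEig Θ i.rev) + (Real.log (descEig G i) + Real.log c) ≤
        c * (descEig G i * descEig Θ i.rev) - 1 := by
    have hG_pos := (descEig_pos_iff_lt_rank hG i).mpr (hi.trans_le htG)
    have hΘ_rev_pos := hΘ_pos i.rev
    calc _ = Real.log (c * (descEig G i * descEig Θ i.rev)) := by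
          rw [Real.log_mul hc.ne' (by positivity), Real.log_mul hG_pos.ne' hΘ_rev_pos.ne']
          ring
      _ ≤ _ := Real.log_le_sub_one_of_pos (by positivity)
  calc bottomLogSum t Θ + (topLogSum t G + t * Real.log c)
      = ∑ i : Fin k with i.val < t,
          (Real.log (descEig Θ i.rev) + (Real.log (descEig G i) + Real.log c)) := by
        rw [bottomLogSum_eq_sum_rev, topLogSum_eq_sum_filter, Finset.sum_add_distrib,
          Finset.sum_add_distrib, Finset.sum_const, hcard, nsmul_eq_mul]
    _ ≤ ∑ i : Fin k with i.val < t, (c * (descEig G i * descEig Θ i.rev) - 1) :=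
        Finset.sum_le_sum fun i hi => hlog i (Finset.mem_filter_univ i |>.mp hi)
    _ = c * ∑ i : Fin k with i.val < t, descEig G i * descEig Θ i.rev - t := by
        rw [Finset.sum_sub_distrib, Finset.sum_const, hcard, nsmul_one, Finset.mul_sum]
    _ ≤ c * ∑ i, descEig G i * descEig Θ i.rev - t := by
        gcongr
        · intro i _ _
          exact mul_nonneg (descEig_nonneg hG i) (hΘ_pos i.rev).le
        · exact Finset.subset_univ _
    _ ≤ c * (G * Θ).trace - t := by
        gcongr
        exact sum_descEig_mul_descEig_rev_le_trace hG.1 hΘ.1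

lemma DGFactFeasible.trace_le {F : Matrix m (Fin k) ℝ} {Θ : Matrix (Fin k) (Fin k) ℝ}
    {υ ν : m → ℝ} {τ : ℝ} (h : DGFactFeasible F Θ υ ν τ) :
    (Fᵀ * F * Θ).trace ≤ ∑ j, ν j + Fintype.card m * τ := by
  obtain ⟨-, hυ, -, hdiag⟩ := h
  calc (Fᵀ * F * Θ).trace = ∑ j, (F * Θ * Fᵀ) j j := by
        rw [Matrix.mul_assoc, trace_mul_comm]; rfl
    _ ≤ ∑ j, (ν j + τ) := Finset.sum_le_sum fun j _ => by linarith [hdiag j, hυ j]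
    _ = ∑ j, ν j + Fintype.card m * τ := by
        rw [Finset.sum_add_distrib, Finset.sum_const, Finset.card_univ, nsmul_eq_mul]

-- Weak duality against the uniform primal solution, which puts weight `s / card m` on each row.
lemma DGFactFeasible.le_objective {F : Matrix m (Fin k) ℝ} {Θ : Matrix (Fin k) (Fin k) ℝ}
    {υ ν : m → ℝ} {τ : ℝ} (h : DGFactFeasible F Θ υ ν τ) (htF : t ≤ F.rank) (hs : 0 < s)
    (hsm : s ≤ Fintype.card m) :
    topLogSum t (Fᵀ * F) + t * Real.log (s / Fintype.card m) ≤ dgfactObjective t s Θ ν τ := by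
  have hm : (0 : ℝ) < Fintype.card m := hs.trans_le hsm
  have hν_sum : 0 ≤ ∑ j, ν j := Finset.sum_nonneg fun j _ => h.2.2.1 j
  have hlog := bottomLogSum_add_topLogSum_le_trace h.1 (posSemidef_transpose_mul_self F)
    (htF.trans_eq (rank_transpose_mul_self F).symm) (div_pos hs hm)
  have htrace : s / Fintype.card m * (Fᵀ * F * Θ).trace ≤ ∑ j, ν j + τ * s :=
    calc s / Fintype.card m * (Fᵀ * F * Θ).trace
        ≤ s / Fintype.card m * (∑ j, ν j + Fintype.card m * τ) := by
          gcongr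
          exact h.trace_le
      _ = s / Fintype.card m * ∑ j, ν j + τ * s := by field_simp
      _ ≤ ∑ j, ν j + τ * s := by
          gcongr
          exact mul_le_of_le_one_left hν_sum ((div_le_one hm).mpr hsm)
  unfold dgfactObjective
  linarith

/-- The matrix `Θ̂ = a (G† + lam⁻¹ (1 - G G†))` for `lam` the least positive eigenvalue of the
positive semidefinite matrix `G`. Since every eigenvalue `x` of `G` is either zero or at least
`lam`, this is the function `a / max x lam` of `G`. -/
noncomputable def dgfactCandidate (a lam : ℝ) (G : Matrix (Fin k) (Fin k) ℝ) :
    Matrix (Fin k) (Fin k) ℝ :=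
  cfc (fun x => a / max x lam) G

variable {a lam : ℝ} {G : Matrix (Fin k) (Fin k) ℝ}

lemma descEig_dgfactCandidate (ha : 0 ≤ a) (hlam : 0 < lam) (hG : G.IsHermitian) (i : Fin k) :
    descEig (dgfactCandidate a lam G) i = a / max (descEig G i.rev) lam :=
  congrFun (descEig_cfc_of_antitoneOn hG fun _ _ _ _ hxy =>
    div_le_div_of_nonneg_left ha (lt_max_of_lt_right hlam) (max_le_max_right lam hxy)) i

lemma dgfactCandidate_posDef (ha : 0 < a) (hlam : 0 < lam) (hG : G.IsHermitian) :
    (dgfactCandidate a lam G).PosDef := by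
  have hΘ : (dgfactCandidate a lam G).IsHermitian := cfc_predicate _ G
  refine (posDef_iff_forall_descEig_pos hΘ).mpr fun i => ?_
  rw [descEig_dgfactCandidate ha.le hlam hG]
  exact div_pos ha (lt_max_of_lt_right hlam)

lemma dgfactCandidate_mul_mul_self_le (ha : 0 ≤ a) (hlam : 0 < lam) (hG : G.IsHermitian) :
    dgfactCandidate a lam G * G * dgfactCandidate a lam G ≤ a • dgfactCandidate a lam G := by
  set f : ℝ → ℝ := fun x => a / max x lam with hf
  have hf_cont : Continuous f :=
    continuous_const.div (continuous_id.max continuous_const) fun _ =>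
      (lt_max_of_lt_right hlam).ne'
  have hf_mul_le (x : ℝ) : f x * x * f x ≤ a * f x := by
    have hmax : 0 < max x lam := lt_max_of_lt_right hlam
    have hfx : f x * x ≤ a := by
      rw [hf, div_mul_eq_mul_div, div_le_iff₀ hmax]
      exact mul_le_mul_of_nonneg_left (le_max_left x lam) ha
    exact mul_le_mul_of_nonneg_right hfx (div_nonneg ha hmax.le)
  have hG_selfAdjoint : IsSelfAdjoint G := hG
  calc cfc f G * G * cfc f G = cfc (fun x => f x * x * f x) G := by
        rw [cfc_mul (fun x => f x * x) f G (hf_cont.mul continuous_id).continuousOn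
          hf_cont.continuousOn, cfc_mul f (fun x => x) G hf_cont.continuousOn continuousOn_id,
          cfc_id' ℝ G]
    _ ≤ cfc (fun x => a * f x) G := cfc_mono (fun x _ => hf_mul_le x)
        ((hf_cont.mul continuous_id).mul hf_cont).continuousOn
        (continuous_const.mul hf_cont).continuousOn
    _ = a • cfc f G := cfc_const_mul a f G hf_cont.continuousOn

lemma diag_le_of_mul_self_le {B : Matrix m m ℝ} (ha : 0 ≤ a) (hB : B.IsHermitian)
    (hBB : B * B ≤ a • B) (j : m) : B j j ≤ a := by
  have hsq : B j j ^ 2 ≤ (B * B) j j := by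
    rw [mul_apply, sq]
    exact Finset.single_le_sum (f := fun i => B j i * B i j)
      (fun i _ => by rw [← hB.apply i j]; exact mul_self_nonneg _) (Finset.mem_univ j)
  have hdiag : (B * B) j j ≤ a * B j j := sub_nonneg.mp (le_iff.mp hBB).diag_nonneg
  nlinarith

lemma diag_mul_dgfactCandidate_mul_transpose_le (F : Matrix m (Fin k) ℝ) (ha : 0 < a)
    (hlam : 0 < lam) (j : m) : (F * dgfactCandidate a lam (Fᵀ * F) * Fᵀ) j j ≤ a := by
  have hG : (Fᵀ * F).IsHermitian := (posSemidef_transpose_mul_self F).1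
  set Θ := dgfactCandidate a lam (Fᵀ * F)
  have hΘ : Θ.PosDef := dgfactCandidate_posDef ha hlam hG
  have hΘ_conj : (F * (a • Θ - Θ * (Fᵀ * F) * Θ) * Fᵀ).PosSemidef :=
    (le_iff.mp (dgfactCandidate_mul_mul_self_le ha.le hlam hG)).mul_mul_conjTranspose_same F
  refine diag_le_of_mul_self_le ha.le (isHermitian_mul_mul_conjTranspose F hΘ.1) (le_iff.mpr ?_) j
  convert! hΘ_conj using 1
  rw [conjTranspose_eq_transpose_of_trivial]
  simp only [Matrix.mul_sub, Matrix.sub_mul, Matrix.mul_smul, Matrix.smul_mul, Matrix.mul_assoc]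

lemma bottomLogSum_dgfactCandidate (ha : 0 < a) (hlam : 0 < lam) (hG : G.IsHermitian)
    (ht : ∀ i : Fin k, i.val < t → lam ≤ descEig G i) (htk : t ≤ k) :
    bottomLogSum t (dgfactCandidate a lam G) = t * Real.log a - topLogSum t G := by
  have hlog (i : Fin k) (hi : i.val < t) :
      Real.log (descEig (dgfactCandidate a lam G) i.rev) =
        Real.log a - Real.log (descEig G i) := by
    rw [descEig_dgfactCandidate ha.le hlam hG, Fin.rev_rev, max_eq_left (ht i hi),
      Real.log_div ha.ne' (hlam.trans_le (ht i hi)).ne']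
  rw [bottomLogSum_eq_sum_rev, topLogSum_eq_sum_filter,
    Finset.sum_congr rfl fun i hi => hlog i (Finset.mem_filter_univ i |>.mp hi),
    Finset.sum_sub_distrib, Finset.sum_const, Fin.card_filter_val_lt, min_eq_right htk,
    nsmul_eq_mul]

lemma exists_feasible_objective_eq (F : Matrix m (Fin k) ℝ) (ht : 0 < t) (htF : t ≤ F.rank)
    (hs : 0 < s) :
    ∃ (Θ : Matrix (Fin k) (Fin k) ℝ) (υ ν : m → ℝ) (τ : ℝ), DGFactFeasible F Θ υ ν τ ∧
      dgfactObjective t s Θ ν τ = topLogSum t (Fᵀ * F) + t * Real.log (s / t) := by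
  have hG : (Fᵀ * F).PosSemidef := posSemidef_transpose_mul_self F
  have hrank_le : F.rank ≤ k := F.rank_le_card_width.trans_eq (Fintype.card_fin k)
  have ha : 0 < t / s := div_pos (Nat.cast_pos.mpr ht) hs
  let last : Fin k := ⟨F.rank - 1, by omega⟩
  have hlast : 0 < descEig (Fᵀ * F) last := by
    rw [descEig_pos_iff_lt_rank hG, rank_transpose_mul_self]
    exact Nat.sub_one_lt_of_lt (ht.trans_le htF)
  have htop (i : Fin k) (hi : i.val < t) : descEig (Fᵀ * F) last ≤ descEig (Fᵀ * F) i :=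
    descEig_antitone _ (Fin.le_def.mpr (Nat.le_sub_one_of_lt (hi.trans_le htF)))
  let Θ := dgfactCandidate (t / s) (descEig (Fᵀ * F) last) (Fᵀ * F)
  refine ⟨Θ, fun j => t / s - (F * Θ * Fᵀ) j j, 0, t / s,
    ⟨dgfactCandidate_posDef ha hlast hG.1, fun j => ?_, fun _ => le_rfl, fun j => ?_⟩, ?_⟩
  · exact sub_nonneg.mpr (diag_mul_dgfactCandidate_mul_transpose_le F ha hlast j)
  · simp
  · rw [dgfactObjective, bottomLogSum_dgfactCandidate ha hlast hG.1 htop (htF.trans hrank_le),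
      div_mul_cancel₀ _ hs.ne', ← inv_div (t : ℝ) s, Real.log_inv]
    simp only [Pi.zero_apply, Finset.sum_const_zero]
    ring

end DGFact

open Matrix in
theorem stmt_19_general {n k t : ℕ} {s : ℝ} (F : Matrix (Fin n) (Fin k) ℝ) (ht : 0 < t)
    (htF : t ≤ F.rank) (hs : 0 < s) (hsn : s ≤ n) :
    (∃ (Θ : Matrix (Fin k) (Fin k) ℝ) (υ ν : Fin n → ℝ) (τ : ℝ), DGFactFeasible F Θ υ ν τ ∧
      dgfactObjective t s Θ ν τ = topLogSum t (F * Fᵀ) + t * Real.log (s / t)) ∧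
    sInf {z | ∃ (Θ : Matrix (Fin k) (Fin k) ℝ) (υ ν : Fin n → ℝ) (τ : ℝ),
        DGFactFeasible F Θ υ ν τ ∧ dgfactObjective t s Θ ν τ = z} ≤
      topLogSum t (F * Fᵀ) + t * Real.log (s / t) := by
  rw [topLogSum_mul_transpose_self]
  have hfeasible := exists_feasible_objective_eq F ht htF hs
  refine ⟨hfeasible, csInf_le ?_ hfeasible⟩
  refine ⟨topLogSum t (Fᵀ * F) + t * Real.log (s / Fintype.card (Fin n)), ?_⟩
  rintro _ ⟨Θ, υ, ν, τ, h, rfl⟩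
  exact h.le_objective htF hs (by rwa [Fintype.card_fin])

/-- For `C ∈ 𝕊ⁿ₊` of rank `r`, a factorization `C = F Fᵀ` with `F ∈ ℝ^{n×k}`, and
`0 < t ≤ r`, `t ≤ s < n`: there is a feasible solution of the convex program DGFact
(minimize `−∑_{ℓ=k−t+1}^k log λ_ℓ(Θ) + νᵀ𝟙 + τ·s − t` subject to
`diag(F Θ Fᵀ) + υ − ν − τ𝟙 = 0`, `Θ ≻ 0`, `υ ≥ 0`, `ν ≥ 0`) whose objective value
equals the spectral bound `∑_{ℓ=1}^t log λ_ℓ(C)` plus `t·log(s/t)`.  In particular,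
`z_DGFact(C,s,t;F) − ∑_{ℓ=1}^t log λ_ℓ(C) ≤ t·log(s/t)`. -/
theorem stmt_19 (n k r t s : ℕ)
    (hr : 0 < r) (hrk : r ≤ k) (hkn : k ≤ n) (ht : 0 < t) (htr : t ≤ r)
    (hts : t ≤ s) (hsn : s < n)
    (C : Matrix (Fin n) (Fin n) ℝ) (F : Matrix (Fin n) (Fin k) ℝ)
    (hC : C.PosSemidef) (hrank : C.rank = r) (hfact : C = F * F.transpose) :
    let obj : Matrix (Fin k) (Fin k) ℝ → (Fin n → ℝ) → ℝ → ℝ := fun Θ ν τ =>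
      -(∑ i : Fin k, if k - t ≤ (i : ℕ) then Real.log (descEig Θ i) else 0)
        + (∑ j, ν j) + τ * (s : ℝ) - (t : ℝ)
    let feas : Matrix (Fin k) (Fin k) ℝ → (Fin n → ℝ) → (Fin n → ℝ) → ℝ → Prop :=
      fun Θ υ ν τ =>
        Θ.PosDef ∧ (∀ j, 0 ≤ υ j) ∧ (∀ j, 0 ≤ ν j) ∧
          ∀ j : Fin n, (F * Θ * F.transpose) j j + υ j - ν j - τ = 0
    let RHS : ℝ :=
      (∑ i : Fin n, if (i : ℕ) < t then Real.log (descEig C i) else 0)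
        + (t : ℝ) * Real.log ((s : ℝ) / t)
    (∃ (Θ : Matrix (Fin k) (Fin k) ℝ) (υ ν : Fin n → ℝ) (τ : ℝ),
        feas Θ υ ν τ ∧ obj Θ ν τ = RHS) ∧
    sInf {z : ℝ | ∃ (Θ : Matrix (Fin k) (Fin k) ℝ) (υ ν : Fin n → ℝ) (τ : ℝ),
        feas Θ υ ν τ ∧ obj Θ ν τ = z} ≤ RHS := by
  subst hfact
  rw [Matrix.rank_self_mul_transpose] at hrank
  exact stmt_19_general F ht (htr.trans_eq hrank.symm) (Nat.cast_pos.mpr (ht.trans_le hts))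
    (Nat.cast_le.mpr hsn.le)
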